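/- Let p ≥ 1 be a natural number, let c : ℤ → ℝ satisfy c(k) = 0 for k < 0 and for k > 2p − 1, and let φ : ℝ → ℝ be differentiable on ℝ, satisfy φ(x) = 0 whenever x ≤ 0 or x ≥ 2p − 1, and satisfy the two-scale equation φ(x) = Σ_{k=0}^{2p−1} c(k)·φ(2x − k) for all x ∈ ℝ. Then for every integer j with 1 ≤ j ≤ 2p − 2, (1/2)·φ′(j) = Σ_{k=1}^{2p−2} c(2j − k)·φ′(k); that is, the vector (φ′(1), …, φ′(2p−2)) is an eigenvector with eigenvalue 1/2 of the matrix L with entries L_{jk} = c(2j − k). -/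

import Mathlib

/-!
Differentiating the two-scale equation at an integer `j` gives
`φ′(j) = 2 ∑ k, c(k) φ′(2j - k)`. After the substitution `k ↦ 2j - k`, the terms that are not
common to this sum and the target sum vanish, because `c` is zero outside `{0, …, 2p-1}` and `φ′`
is zero outside `{1, …, 2p-2}` on the integers. At the endpoints `0` and `2p-1`, where `φ` is zero
on one side only, `φ′` is computed as a one-sided derivative.
-/

/-- The derivative is determined by the values on `s` when `s` has the unique differentiability
property at `x`; in particular `s` may be a closed half-line with endpoint `x`. -/
lemma deriv_eq_zero_of_vanishing {φ : ℝ → ℝ} (hdiff : Differentiable ℝ φ) {s : Set ℝ} {x : ℝ}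
    (hs : UniqueDiffWithinAt ℝ s x) (hx : x ∈ s) (h : ∀ y ∈ s, φ y = 0) : deriv φ x = 0 := by
  have h1 : HasDerivWithinAt φ (deriv φ x) s x := (hdiff x).hasDerivAt.hasDerivWithinAt
  have h2 : HasDerivWithinAt φ 0 s x :=
    (hasDerivWithinAt_const x s (0 : ℝ)).congr h (h x hx)
  exact hs.eq_deriv s h1 h2

/-- The vector (φ′(1), …, φ′(2p−2)) is an eigenvector with eigenvalue 1/2 of the matrix
L_{jk} = c(2j−k). -/
theorem scaling_function_deriv_integer_eigenvector
    (p : ℕ) (hp : 1 ≤ p) (c : ℤ → ℝ)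
    (hc : ∀ k : ℤ, (k < 0 ∨ 2*(p:ℤ) - 1 < k) → c k = 0)
    (φ : ℝ → ℝ) (hdiff : Differentiable ℝ φ)
    (hsupp : ∀ x : ℝ, (x ≤ 0 ∨ 2*(p:ℝ) - 1 ≤ x) → φ x = 0)
    (htwoscale : ∀ x : ℝ, φ x = ∑ k ∈ Finset.range (2*p), c (k : ℤ) * φ (2*x - (k : ℝ))) :
    ∀ j : ℤ, 1 ≤ j → j ≤ 2*(p:ℤ) - 2 →
      (1/2) * deriv φ (j : ℝ) =
        ∑ k ∈ Finset.Icc (1:ℤ) (2*(p:ℤ) - 2), c (2*j - k) * deriv φ (k : ℝ) := by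
  intro j _ _
  have hzero : ∀ m : ℤ, (m ≤ 0 ∨ 2*(p:ℤ) - 1 ≤ m) → deriv φ (m : ℝ) = 0 := by
    rintro m (hm | hm)
    · have hm' : (m : ℝ) ≤ 0 := by exact_mod_cast hm
      exact deriv_eq_zero_of_vanishing hdiff (uniqueDiffOn_Iic (m : ℝ) _ Set.self_mem_Iic)
        Set.self_mem_Iic fun y hy => hsupp y (Or.inl (le_trans hy hm'))
    · have hm' : 2*(p:ℝ) - 1 ≤ m := by exact_mod_cast hm
      exact deriv_eq_zero_of_vanishing hdiff (uniqueDiffOn_Ici (m : ℝ) _ Set.self_mem_Ici)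
        Set.self_mem_Ici fun y hy => hsupp y (Or.inr (le_trans hm' hy))
  have hderiv : HasDerivAt φ
      (∑ k ∈ Finset.range (2*p), c (k : ℤ) * (deriv φ (2*(j:ℝ) - (k:ℝ)) * 2)) (j : ℝ) := by
    refine HasDerivAt.congr_of_eventuallyEq (HasDerivAt.fun_sum fun k _ => ?_)
      (Filter.Eventually.of_forall htwoscale)
    have hinner : HasDerivAt (fun x : ℝ => 2*x - (k:ℝ)) 2 (j:ℝ) := by
      simpa using ((hasDerivAt_id (j:ℝ)).const_mul 2).sub_const (k:ℝ)
    exact ((hdiff _).hasDerivAt.comp (j:ℝ) hinner).const_mul _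
  rw [hderiv.deriv, Finset.mul_sum]
  refine Finset.sum_bij_ne_zero (fun k _ _ => 2*j - (k:ℤ)) ?_ ?_ ?_ ?_
  · intro k _ hne
    rw [Finset.mem_Icc]
    by_contra hout
    have h0 := hzero (2*j - (k:ℤ)) (by omega)
    push_cast at h0
    simp [h0] at hne
  · intro a _ _ b _ _ hab
    omega
  · intro m _ hne
    have hrange : ¬(2*j - m < 0 ∨ 2*(p:ℤ) - 1 < 2*j - m) := fun h => hne (by simp [hc _ h])
    have hcast : (((2*j - m).toNat : ℕ) : ℤ) = 2*j - m := Int.toNat_of_nonneg (by omega)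
    have hcast' : (((2*j - m).toNat : ℕ) : ℝ) = 2*(j:ℝ) - m := by exact_mod_cast hcast
    refine ⟨(2*j - m).toNat, Finset.mem_range.2 (by omega), ?_, by omega⟩
    rw [hcast, hcast', sub_sub_cancel]
    intro h
    exact hne (by linarith)
  · intro k _ _
    push_cast
    rw [sub_sub_cancel]
    ring
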